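/- Extend w to all unordered pairs by setting w(u,v) = 0 when {u,v} ∉ E. Let u_1, u_2, …, u_n be an enumeration of V satisfying the greedy property: for every i < n and every v ∈ {u_{i+1}, …, u_n}, w(u_i, u_{i+1}) ≥ w(u_i, v). Let d be the ordering with d(u_i) = i. Then val(d) ≥ Σ_{i=1}^{n−1} w(u_i, u_{i+1}) and OPT ≤ 2k · Σ_{i=1}^{n−1} w(u_i, u_{i+1}); hence val(d) ≥ OPT/(2k), i.e., the greedy algorithm is a 2k-approximation. -/

import Mathlib

open Classical in
/-- The Ext-TSP value of an ordering `d` of the vertices of `G`. -/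
noncomputable def extVal {V : Type} [Fintype V] (G : SimpleGraph V)
    (w : V → V → ℝ) (f : ℕ → ℝ) (d : V ≃ Fin (Fintype.card V)) : ℝ :=
  (1 / 2) * ∑ u : V, ∑ v : V,
    if G.Adj u v then f (Nat.dist (d u) (d v)) * w u v else 0

/-- The total weight of consecutive pairs in the ordering `d`,
`∑_{i=1}^{n-1} w(u_i, u_{i+1})` where `u_i = d.symm i`. -/
noncomputable def greedySum {V : Type} [Fintype V] (w : V → V → ℝ)
    (d : V ≃ Fin (Fintype.card V)) : ℝ :=
  ∑ i : Fin (Fintype.card V),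
    if hi : (i : ℕ) + 1 < Fintype.card V then
      w (d.symm i) (d.symm ⟨(i : ℕ) + 1, hi⟩) else 0

/-!
Charge every edge to its earlier endpoint in the greedy ordering `d`. By greediness the weight of an
edge charged to `u` is at most that of the step from `u` to its successor. An edge contributes to
`val(d')` only if its endpoints lie within distance `k` of each other in `d'`, so at most `2k`
contributing edges are charged to `u`; hence `val(d')` is at most `2k` times the greedy sum. The
greedy sum is in turn at most `val(d)`, being the contribution of the consecutive pairs.
-/

open Finset Function

theorem sum_sum_eq_two_nsmul_sum_lt {ι α M : Type*} [Fintype ι] [LinearOrder α] [AddCommMonoid M]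
    {e : ι → α} (he : Injective e) {F : ι → ι → M} (hsymm : ∀ i j, F i j = F j i)
    (hdiag : ∀ i, F i i = 0) :
    ∑ i, ∑ j, F i j = 2 • ∑ i, ∑ j with e i < e j, F i j := by
  have hsplit (i j : ι) :
      F i j = (if e i < e j then F i j else 0) + if e j < e i then F j i else 0 := by
    rcases lt_trichotomy (e i) (e j) with h | h | h
    · simp [h, h.not_gt]
    · simp [he h, hdiag]
    · simp [h, h.not_gt, hsymm i j]
  calc ∑ i, ∑ j, F i j
      = ∑ i, ∑ j, ((if e i < e j then F i j else 0) + if e j < e i then F j i else 0) :=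
        sum_congr rfl fun i _ => sum_congr rfl fun j _ => hsplit i j
    _ = ∑ i, ∑ j, (if e i < e j then F i j else 0)
          + ∑ j, ∑ i, (if e j < e i then F j i else 0) := by
        simp_rw [sum_add_distrib]
        rw [sum_comm (f := fun i j => if e j < e i then F j i else 0)]
    _ = 2 • ∑ i, ∑ j with e i < e j, F i j := by simp_rw [two_nsmul, sum_filter]

theorem card_ne_and_dist_le {ι : Type*} [Fintype ι] [DecidableEq ι] {p : ι → ℕ}
    (hp : Injective p) (k : ℕ) (i : ι) :
    #{j | j ≠ i ∧ Nat.dist (p i) (p j) ≤ k} ≤ 2 * k :=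
  calc #{j | j ≠ i ∧ Nat.dist (p i) (p j) ≤ k}
      ≤ #((Icc (p i - k) (p i + k)).erase (p i)) := by
        refine card_le_card_of_injOn p (fun j hj => ?_) hp.injOn
        obtain ⟨hne, hdist⟩ := (mem_filter_univ j).mp hj
        rw [Nat.dist] at hdist
        exact mem_erase.mpr ⟨hp.ne hne, mem_Icc.mpr (by lia)⟩
    _ ≤ 2 * k := by
        rw [card_erase_of_mem (by simp), Nat.card_Icc]
        lia

section Ordering

variable {V : Type} [Fintype V] {G : SimpleGraph V} {w : V → V → ℝ} {f : ℕ → ℝ}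
  {d : V ≃ Fin (Fintype.card V)}

/-- The weight of the pair formed by `u` and its successor in the ordering `d`; it is `0` for the
last vertex. -/
noncomputable def succWeight (w : V → V → ℝ) (d : V ≃ Fin (Fintype.card V)) (u : V) : ℝ :=
  if hi : (d u : ℕ) + 1 < Fintype.card V then w u (d.symm ⟨(d u : ℕ) + 1, hi⟩) else 0

/-- The greedy property of the enumeration `i ↦ d.symm i`: the successor of each vertex is a
heaviest partner among all later vertices. -/
def IsGreedyOrdering (w : V → V → ℝ) (d : V ≃ Fin (Fintype.card V)) : Prop :=
  ∀ (i j : Fin (Fintype.card V)) (hi : (i : ℕ) + 1 < Fintype.card V), (i : ℕ) < (j : ℕ) →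
    w (d.symm i) (d.symm j) ≤ w (d.symm i) (d.symm ⟨(i : ℕ) + 1, hi⟩)

theorem greedySum_eq_sum_succWeight (w : V → V → ℝ) (d : V ≃ Fin (Fintype.card V)) :
    greedySum w d = ∑ u, succWeight w d u := by
  rw [← Equiv.sum_comp d.symm]
  simp [greedySum, succWeight]

theorem succWeight_nonneg (hw_nonneg : ∀ u v, 0 ≤ w u v) (d : V ≃ Fin (Fintype.card V)) (u : V) :
    0 ≤ succWeight w d u := by
  unfold succWeight
  split_ifs
  exacts [hw_nonneg _ _, le_rfl]

theorem IsGreedyOrdering.le_succWeight (hd : IsGreedyOrdering w d) {u v : V} (huv : d u < d v) :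
    w u v ≤ succWeight w d u := by
  have hi : (d u : ℕ) + 1 < Fintype.card V := (Nat.succ_le_of_lt huv).trans_lt (d v).isLt
  simpa [succWeight, hi] using hd (d u) (d v) hi huv

-- The ordering `e` is independent of `d` so that the pairs of an arbitrary ordering can be charged
-- along the greedy one.
theorem extVal_eq_sum_lt (hw_symm : ∀ u v, w u v = w v u)
    (hw_zero : ∀ u v, ¬ G.Adj u v → w u v = 0) (d e : V ≃ Fin (Fintype.card V)) :
    extVal G w f d = ∑ u, ∑ v with e u < e v, f (Nat.dist (d u) (d v)) * w u v := by
  have hterm (u v : V) [Decidable (G.Adj u v)] :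
      (if G.Adj u v then f (Nat.dist (d u) (d v)) * w u v else 0)
        = f (Nat.dist (d u) (d v)) * w u v :=
    ite_eq_left_iff.mpr fun h => by rw [hw_zero u v h, mul_zero]
  have hsymm (u v : V) :
      f (Nat.dist (d u) (d v)) * w u v = f (Nat.dist (d v) (d u)) * w v u := by
    rw [Nat.dist_comm, hw_symm]
  have hdiag (u : V) : f (Nat.dist (d u) (d u)) * w u u = 0 := by
    rw [hw_zero u u G.irrefl, mul_zero]
  simp_rw [extVal, hterm]
  rw [sum_sum_eq_two_nsmul_sum_lt e.injective hsymm hdiag, nsmul_eq_mul]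
  ring

theorem succWeight_le_sum_lt (hw_nonneg : ∀ u v, 0 ≤ w u v) (hf_nonneg : ∀ i, 0 ≤ f i)
    (hf_one : f 1 = 1) (d : V ≃ Fin (Fintype.card V)) (u : V) :
    succWeight w d u ≤ ∑ v with d u < d v, f (Nat.dist (d u) (d v)) * w u v := by
  have hterm_nonneg (v : V) : 0 ≤ f (Nat.dist (d u) (d v)) * w u v :=
    mul_nonneg (hf_nonneg _) (hw_nonneg u v)
  unfold succWeight
  split_ifs with hi
  · set s := d.symm ⟨(d u : ℕ) + 1, hi⟩
    have hs : (d s : ℕ) = d u + 1 := by simp [s]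
    have hdist : Nat.dist (d u) (d s) = 1 := by simp [hs, Nat.dist]
    have hmem : s ∈ ({v | d u < d v} : Finset V) := by
      simp only [mem_filter_univ, Fin.lt_def]
      lia
    calc w u s = f (Nat.dist (d u) (d s)) * w u s := by rw [hdist, hf_one, one_mul]
      _ ≤ _ := single_le_sum (fun v _ => hterm_nonneg v) hmem
  · exact sum_nonneg fun v _ => hterm_nonneg v

theorem greedySum_le_extVal (hw_symm : ∀ u v, w u v = w v u) (hw_nonneg : ∀ u v, 0 ≤ w u v)
    (hw_zero : ∀ u v, ¬ G.Adj u v → w u v = 0) (hf_nonneg : ∀ i, 0 ≤ f i) (hf_one : f 1 = 1)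
    (d : V ≃ Fin (Fintype.card V)) : greedySum w d ≤ extVal G w f d := by
  rw [greedySum_eq_sum_succWeight, extVal_eq_sum_lt hw_symm hw_zero d d]
  exact sum_le_sum fun u _ => succWeight_le_sum_lt hw_nonneg hf_nonneg hf_one d u

theorem IsGreedyOrdering.sum_lt_le_two_mul_succWeight (hd : IsGreedyOrdering w d)
    (hw_nonneg : ∀ u v, 0 ≤ w u v) {k : ℕ} (hf_le_one : ∀ i, 1 ≤ i → f i ≤ 1)
    (hf_zero : ∀ i, k < i → f i = 0) (d' : V ≃ Fin (Fintype.card V)) (u : V) :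
    ∑ v with d u < d v, f (Nat.dist (d' u) (d' v)) * w u v ≤ 2 * k * succWeight w d u := by
  classical
  have hs := succWeight_nonneg hw_nonneg d u
  have hcharge (v : V) (huv : d u < d v) : f (Nat.dist (d' u) (d' v)) * w u v
      ≤ if Nat.dist (d' u) (d' v) ≤ k then succWeight w d u else 0 := by
    split_ifs with hk
    · have hne : d' u ≠ d' v := d'.injective.ne (ne_of_apply_ne d huv.ne)
      have hf := hf_le_one _ (Nat.dist_pos_of_ne (Fin.val_ne_of_ne hne))
      exact (mul_le_of_le_one_left (hw_nonneg u v) hf).trans (hd.le_succWeight huv)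
    · rw [hf_zero _ (not_le.mp hk), zero_mul]
  have hcard : #{v | d u < d v ∧ Nat.dist (d' u) (d' v) ≤ k} ≤ 2 * k :=
    (card_le_card <| monotone_filter_right _ fun v _ h =>
      ⟨ne_of_apply_ne d h.1.ne', h.2⟩).trans
      (card_ne_and_dist_le (Fin.val_injective.comp d'.injective) k u)
  calc ∑ v with d u < d v, f (Nat.dist (d' u) (d' v)) * w u v
      ≤ ∑ v with d u < d v, if Nat.dist (d' u) (d' v) ≤ k then succWeight w d u else 0 :=
        sum_le_sum fun v hv => hcharge v ((mem_filter_univ v).mp hv)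
    _ = #{v | d u < d v ∧ Nat.dist (d' u) (d' v) ≤ k} * succWeight w d u := by
        rw [← sum_filter, filter_filter, sum_const, nsmul_eq_mul]
    _ ≤ 2 * k * succWeight w d u := by
        gcongr
        exact_mod_cast hcard

theorem IsGreedyOrdering.extVal_le_two_mul_greedySum (hd : IsGreedyOrdering w d)
    (hw_symm : ∀ u v, w u v = w v u) (hw_nonneg : ∀ u v, 0 ≤ w u v)
    (hw_zero : ∀ u v, ¬ G.Adj u v → w u v = 0) {k : ℕ} (hf_le_one : ∀ i, 1 ≤ i → f i ≤ 1)
    (hf_zero : ∀ i, k < i → f i = 0) (d' : V ≃ Fin (Fintype.card V)) :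
    extVal G w f d' ≤ 2 * k * greedySum w d := by
  rw [extVal_eq_sum_lt hw_symm hw_zero d' d, greedySum_eq_sum_succWeight, mul_sum]
  exact sum_le_sum fun u _ => hd.sum_lt_le_two_mul_succWeight hw_nonneg hf_le_one hf_zero d' u

end Ordering

theorem extTSP_greedy_two_k_approx_general {V : Type} [Fintype V] (G : SimpleGraph V)
    (w : V → V → ℝ) (hw_symm : ∀ u v, w u v = w v u) (hw_nonneg : ∀ u v, 0 ≤ w u v)
    (hw_zero : ∀ u v, ¬ G.Adj u v → w u v = 0) (k : ℕ)
    (f : ℕ → ℝ) (hf_nonneg : ∀ i, 0 ≤ f i) (hf_le_one : ∀ i, 1 ≤ i → f i ≤ 1)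
    (hf_one : f 1 = 1) (hf_zero : ∀ i, k < i → f i = 0)
    (d : V ≃ Fin (Fintype.card V)) (hd : IsGreedyOrdering w d) :
    extVal G w f d ≥ greedySum w d ∧
    (⨆ d' : V ≃ Fin (Fintype.card V), extVal G w f d') ≤ 2 * (k : ℝ) * greedySum w d ∧
    extVal G w f d ≥ (⨆ d' : V ≃ Fin (Fintype.card V), extVal G w f d') / (2 * (k : ℝ)) := by
  have hk : 0 < k := by
    by_contra hk
    linarith [hf_zero 1 (by lia)]
  have hlower := greedySum_le_extVal hw_symm hw_nonneg hw_zero hf_nonneg hf_one d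
  have : Nonempty (V ≃ Fin (Fintype.card V)) := ⟨d⟩
  have hupper : ⨆ d', extVal G w f d' ≤ 2 * k * greedySum w d :=
    ciSup_le (hd.extVal_le_two_mul_greedySum hw_symm hw_nonneg hw_zero hf_le_one hf_zero)
  exact ⟨hlower, hupper, ((div_le_iff₀' (by positivity)).mpr hupper).trans hlower⟩

/-- If the enumeration `u_1, …, u_n` given by `d` satisfies the greedy
property (each `u_{i+1}` is a heaviest available partner of `u_i`, with `w = 0` on
non-edges), then `val(d) ≥ ∑ w(u_i,u_{i+1})`, `OPT ≤ 2k·∑ w(u_i,u_{i+1})`, and hence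
`val(d) ≥ OPT/(2k)`: greedy is a `2k`-approximation. -/
theorem extTSP_greedy_two_k_approx {V : Type} [Fintype V] [DecidableEq V]
    (G : SimpleGraph V) [DecidableRel G.Adj]
    (w : V → V → ℝ) (hw_symm : ∀ u v, w u v = w v u)
    (hw_pos : ∀ u v, G.Adj u v → 0 < w u v)
    (hw_zero : ∀ u v, ¬ G.Adj u v → w u v = 0)
    (k : ℕ) (hk : 1 ≤ k)
    (f : ℕ → ℝ) (hf_nonneg : ∀ i, 0 ≤ f i) (hf_mono : Antitone f)
    (hf_one : f 1 = 1) (hf_zero : ∀ i, k < i → f i = 0)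
    (d : V ≃ Fin (Fintype.card V))
    (hgreedy : ∀ (i j : Fin (Fintype.card V)) (hi : (i : ℕ) + 1 < Fintype.card V),
      (i : ℕ) < (j : ℕ) →
      w (d.symm i) (d.symm j) ≤ w (d.symm i) (d.symm ⟨(i : ℕ) + 1, hi⟩)) :
    extVal G w f d ≥ greedySum w d ∧
    (⨆ d' : V ≃ Fin (Fintype.card V), extVal G w f d')
      ≤ 2 * (k : ℝ) * greedySum w d ∧
    extVal G w f d ≥ (⨆ d' : V ≃ Fin (Fintype.card V), extVal G w f d') / (2 * (k : ℝ)) := by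
  have hw_nonneg (u v : V) : 0 ≤ w u v :=
    (em (G.Adj u v)).elim (fun h => (hw_pos u v h).le) fun h => (hw_zero u v h).ge
  exact extTSP_greedy_two_k_approx_general G w hw_symm hw_nonneg hw_zero k f hf_nonneg
    (fun _ hi => hf_one ▸ hf_mono hi) hf_one hf_zero d hgreedy
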